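/- Let A be a linear relation in a complex vector space H and let λ, μ ∈ ℂ with λ ≠ μ. Then R_c(A) = R_λ(A) ∩ R_μ(A). -/

import Mathlib

/-!
Each root space is the least submodule `K` closed under a one-step rule: for `R_λ(A)` the rule is
`(x, y) ∈ A`, `y - λ x ∈ K` imply `x ∈ K`, and for `R_∞(A)` it is `(x, y) ∈ A`, `x ∈ K` imply
`y ∈ K`. Consequently the root spaces behave as expected under Möbius transformations of `A`, and
everything reduces to the inclusion `R_0(P) ∩ R_∞(P) ≤ R_ν(P)` for an arbitrary relation `P`
(`singChain_le_rootSpace`).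

For that inclusion, a point of the left side lies on a chain `0 = x₀ → x₁ → ⋯ → xₙ = 0` of `P`.
The sequence `y₀ = x₀`, `y_{j+1} = ν y_j + x_{j+1}` is again a chain, and
`y_n - ν y_{n-1} = x_n = 0` puts `y_{n-1}` in `K = R_ν(P)`. So modulo `K` the `y_j` form a shorter
chain from zero to zero; by induction on the length all `y_j`, hence all `x_j`, lie in `K`.

Applied to `P = A - λ` this gives `R_λ ∩ R_∞ ≤ R_μ` for all `λ, μ`; applied to
`P = {(y - μ x, y - λ x) : (x, y) ∈ A}` with `ν = 1` it gives `R_λ ∩ R_μ ≤ R_∞` for `λ ≠ μ`.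
-/

open Submodule Set

variable {H : Type*} [AddCommGroup H] [Module ℂ H]

/-- A linear relation in `H`: a linear subspace of the product `H × H`. -/
abbrev LinRel (H : Type*) [AddCommGroup H] [Module ℂ H] : Type _ := Submodule ℂ (H × H)

namespace LinRel

/-- The relation `A - λ = {(x, y - λ x) : (x,y) ∈ A}`. -/
def shift (A : LinRel H) (lam : ℂ) : LinRel H :=
  A.map ((LinearMap.fst ℂ H H).prod (LinearMap.snd ℂ H H - lam • LinearMap.fst ℂ H H))

/-- The relation `λ A = {(x, λ y) : (x,y) ∈ A}`. -/
def smulRel (lam : ℂ) (A : LinRel H) : LinRel H :=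
  A.map ((LinearMap.fst ℂ H H).prod (lam • LinearMap.snd ℂ H H))

/-- The inverse relation `A⁻¹ = {(y,x) : (x,y) ∈ A}`. -/
def inv (A : LinRel H) : LinRel H :=
  A.map ((LinearMap.snd ℂ H H).prod (LinearMap.fst ℂ H H))

/-- The product (composition) `A B = {(x,y) : ∃ z, (x,z) ∈ B ∧ (z,y) ∈ A}`. -/
def comp (A B : LinRel H) : LinRel H where
  carrier := {p | ∃ z, (p.1, z) ∈ B ∧ (z, p.2) ∈ A}
  zero_mem' := ⟨0, B.zero_mem, A.zero_mem⟩
  add_mem' := by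
    rintro p q ⟨z1, h1, h2⟩ ⟨z2, h3, h4⟩
    exact ⟨z1 + z2, B.add_mem h1 h3, A.add_mem h2 h4⟩
  smul_mem' := by
    rintro c p ⟨z, h1, h2⟩
    exact ⟨c • z, B.smul_mem c h1, A.smul_mem c h2⟩

/-- The identity relation `I = {(x,x) : x ∈ H}`. -/
def idRel : LinRel H := LinearMap.graph (LinearMap.id : H →ₗ[ℂ] H)

/-- Powers: `A⁰ = I` and `Aᵏ = A · Aᵏ⁻¹`. -/
def pow (A : LinRel H) : ℕ → LinRel H
  | 0 => idRel
  | (k+1) => comp A (pow A k)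

/-- The kernel `ker A = {x : (x,0) ∈ A}`. -/
def ker (A : LinRel H) : Submodule ℂ H := A.comap (LinearMap.inl ℂ H H)

/-- The multivalued part `mul A = {y : (0,y) ∈ A}`. -/
def mul (A : LinRel H) : Submodule ℂ H := A.comap (LinearMap.inr ℂ H H)

lemma mem_ker {A : LinRel H} {x : H} : x ∈ ker A ↔ (x, (0:H)) ∈ A := by
  simp [ker, Submodule.mem_comap]

lemma mem_mul {A : LinRel H} {y : H} : y ∈ mul A ↔ ((0:H), y) ∈ A := by
  simp [mul, Submodule.mem_comap]

lemma ker_pow_le_succ (A : LinRel H) (i : ℕ) : ker (pow A i) ≤ ker (pow A (i+1)) := by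
  intro x hx
  rw [mem_ker] at hx ⊢
  exact ⟨0, hx, A.zero_mem⟩

lemma ker_pow_mono (A : LinRel H) : Monotone fun i => ker (pow A i) :=
  monotone_nat_of_le_succ (ker_pow_le_succ A)

lemma mul_pow_le_succ (A : LinRel H) : ∀ i, mul (pow A i) ≤ mul (pow A (i+1)) := by
  intro i
  induction i with
  | zero =>
    intro y hy
    rw [mem_mul] at hy ⊢
    have : y = 0 := by simpa [pow, idRel, LinearMap.mem_graph_iff] using hy
    subst this
    exact Submodule.zero_mem _
  | succ i ih =>
    intro y hy
    rw [mem_mul] at hy ⊢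
    obtain ⟨w, hw, hwy⟩ := hy
    exact ⟨w, mem_mul.mp (ih (mem_mul.mpr hw)), hwy⟩

lemma mul_pow_mono (A : LinRel H) : Monotone fun i => mul (pow A i) :=
  monotone_nat_of_le_succ (mul_pow_le_succ A)

/-- The root space `R_λ(A) = ⋃_{i ≥ 1} ker (A - λ)ⁱ`. -/
def rootSpace (A : LinRel H) (lam : ℂ) : Submodule ℂ H where
  carrier := ⋃ i : ℕ, (ker (pow (shift A lam) (i+1)) : Set H)
  zero_mem' := Set.mem_iUnion.2 ⟨0, Submodule.zero_mem _⟩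
  add_mem' := by
    intro a b ha hb
    obtain ⟨i, hi⟩ := Set.mem_iUnion.1 ha
    obtain ⟨j, hj⟩ := Set.mem_iUnion.1 hb
    exact Set.mem_iUnion.2 ⟨max i j, Submodule.add_mem _
      (ker_pow_mono _ (by omega : i + 1 ≤ max i j + 1) hi)
      (ker_pow_mono _ (by omega : j + 1 ≤ max i j + 1) hj)⟩
  smul_mem' := by
    intro c a ha
    obtain ⟨i, hi⟩ := Set.mem_iUnion.1 ha
    exact Set.mem_iUnion.2 ⟨i, Submodule.smul_mem _ c hi⟩

/-- The root space at infinity `R_∞(A) = ⋃_{i ≥ 1} mul Aⁱ`. -/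
def rootInf (A : LinRel H) : Submodule ℂ H where
  carrier := ⋃ i : ℕ, (mul (pow A (i+1)) : Set H)
  zero_mem' := Set.mem_iUnion.2 ⟨0, Submodule.zero_mem _⟩
  add_mem' := by
    intro a b ha hb
    obtain ⟨i, hi⟩ := Set.mem_iUnion.1 ha
    obtain ⟨j, hj⟩ := Set.mem_iUnion.1 hb
    exact Set.mem_iUnion.2 ⟨max i j, Submodule.add_mem _
      (mul_pow_mono _ (by omega : i + 1 ≤ max i j + 1) hi)
      (mul_pow_mono _ (by omega : j + 1 ≤ max i j + 1) hj)⟩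
  smul_mem' := by
    intro c a ha
    obtain ⟨i, hi⟩ := Set.mem_iUnion.1 ha
    exact Set.mem_iUnion.2 ⟨i, Submodule.smul_mem _ c hi⟩

/-- The singular chain space `R_c(A) = R_0(A) ∩ R_∞(A)`. -/
def singChain (A : LinRel H) : Submodule ℂ H := rootSpace A 0 ⊓ rootInf A

/-- The root space at a point of `ℂ ∪ {∞}` (modelled as `Option ℂ`, with `none = ∞`). -/
def rootSpaceE (A : LinRel H) : Option ℂ → Submodule ℂ H
  | none => rootInf A
  | some lam => rootSpace A lam

/-- `λ ∈ ℂ ∪ {∞}` is an eigenvalue of `A`. -/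
def isEigenvalue (A : LinRel H) : Option ℂ → Prop
  | none => mul A ≠ ⊥
  | some lam => ker (shift A lam) ≠ ⊥

end LinRel

namespace LinRel

lemma mem_shift {A : LinRel H} {lam : ℂ} {u v : H} :
    (u, v) ∈ shift A lam ↔ (u, v + lam • u) ∈ A := by
  constructor
  · rintro ⟨⟨x, y⟩, h, heq⟩
    obtain ⟨rfl, rfl⟩ : x = u ∧ y - lam • x = v := Prod.mk.inj heq
    simpa using h
  · intro h
    exact ⟨_, h, Prod.ext rfl (add_sub_cancel_right v (lam • u))⟩

lemma mem_rootSpace {A : LinRel H} {lam : ℂ} {x : H} :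
    x ∈ rootSpace A lam ↔ ∃ i, (x, (0 : H)) ∈ pow (shift A lam) (i + 1) := by
  change x ∈ (⋃ i : ℕ, (ker (pow (shift A lam) (i+1)) : Set H)) ↔ _
  simp only [Set.mem_iUnion, SetLike.mem_coe, mem_ker]

lemma mem_rootInf {A : LinRel H} {y : H} :
    y ∈ rootInf A ↔ ∃ i, ((0 : H), y) ∈ pow A (i + 1) := by
  change y ∈ (⋃ i : ℕ, (mul (pow A (i+1)) : Set H)) ↔ _
  simp only [Set.mem_iUnion, SetLike.mem_coe, mem_mul]

lemma mem_pow_zero {A : LinRel H} {a b : H} : (a, b) ∈ pow A 0 ↔ b = a := by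
  simp [pow, idRel, LinearMap.mem_graph_iff]

lemma pow_trans {A : LinRel H} {m : ℕ} {a b : H} (h : (a, b) ∈ pow A m) :
    ∀ (n : ℕ) (c : H), (b, c) ∈ pow A n → (a, c) ∈ pow A (m + n) := by
  intro n
  induction n with
  | zero =>
    intro c hc
    rw [mem_pow_zero] at hc
    rwa [hc]
  | succ n ih =>
    rintro c ⟨z, hz, hzc⟩
    exact ⟨z, ih z hz, hzc⟩

lemma rootSpace_closed {A : LinRel H} {lam : ℂ} {x y : H} (h : (x, y) ∈ A)
    (hy : y - lam • x ∈ rootSpace A lam) : x ∈ rootSpace A lam := by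
  obtain ⟨i, hi⟩ := mem_rootSpace.1 hy
  have h1 : (x, y - lam • x) ∈ pow (shift A lam) 1 :=
    ⟨x, mem_pow_zero.2 rfl, mem_shift.2 (by simpa using h)⟩
  have h2 := pow_trans h1 _ _ hi
  rw [add_comm] at h2
  exact mem_rootSpace.2 ⟨_, h2⟩

lemma rootSpace_le {A : LinRel H} {lam : ℂ} {K : Submodule ℂ H}
    (hK : ∀ x y, (x, y) ∈ A → y - lam • x ∈ K → x ∈ K) : rootSpace A lam ≤ K := by
  have key : ∀ n x z, (x, z) ∈ pow (shift A lam) n → z ∈ K → x ∈ K := by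
    intro n
    induction n with
    | zero =>
      intro x z h hz
      rwa [← mem_pow_zero.1 h]
    | succ n ih =>
      rintro x z ⟨w, hw, hwz⟩ hz
      exact ih x w hw (hK w _ (mem_shift.1 hwz) (by simpa using hz))
  intro x hx
  obtain ⟨i, hi⟩ := mem_rootSpace.1 hx
  exact key _ _ _ hi K.zero_mem

lemma rootInf_closed {A : LinRel H} {x y : H} (h : (x, y) ∈ A)
    (hx : x ∈ rootInf A) : y ∈ rootInf A := by
  obtain ⟨i, hi⟩ := mem_rootInf.1 hx
  exact mem_rootInf.2 ⟨i + 1, x, hi, h⟩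

lemma rootInf_le {A : LinRel H} {K : Submodule ℂ H}
    (hK : ∀ x y, (x, y) ∈ A → x ∈ K → y ∈ K) : rootInf A ≤ K := by
  have key : ∀ n x z, (x, z) ∈ pow A n → x ∈ K → z ∈ K := by
    intro n
    induction n with
    | zero =>
      intro x z h hz
      rwa [mem_pow_zero.1 h]
    | succ n ih =>
      rintro x z ⟨w, hw, hwz⟩ hz
      exact hK w z hwz (ih x w hw hz)
  intro x hx
  obtain ⟨i, hi⟩ := mem_rootInf.1 hx
  exact key _ _ _ hi K.zero_mem

/-- A chain of `A` of length `i` ending at `f i` can be prolonged along any pair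
`(f i, b)` of `Aᵏ`. -/
lemma exists_chain {A : LinRel H} (i : ℕ) (f : ℕ → H) (hf : ∀ j < i, (f j, f (j + 1)) ∈ A) :
    ∀ (k : ℕ) (b : H), (f i, b) ∈ pow A k →
      ∃ g : ℕ → H, (∀ j ≤ i, g j = f j) ∧ g (i + k) = b ∧
        ∀ j < i + k, (g j, g (j + 1)) ∈ A := by
  intro k
  induction k with
  | zero =>
    intro b hb
    exact ⟨f, fun _ _ => rfl, (mem_pow_zero.1 hb).symm, hf⟩
  | succ k ih =>
    rintro b ⟨z, hz, hzb⟩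
    obtain ⟨g, hg, hgz, hgA⟩ := ih z hz
    refine ⟨Function.update g (i + k + 1) b, ?_, ?_, ?_⟩
    · intro j hj
      rw [Function.update_of_ne (by omega), hg j hj]
    · simp [← add_assoc]
    · intro j hj
      rw [Function.update_of_ne (by omega)]
      rcases Nat.lt_succ_iff_lt_or_eq.1 (show j < i + k + 1 from hj) with h | rfl
      · rw [Function.update_of_ne (by omega)]
        exact hgA j h
      · rw [Function.update_self, hgz]
        exact hzb

/-- If `K` is closed under the rule defining the root space at `nu`, a chain with both
ends in `K` lies entirely in `K`. The assumption `K × K ≤ B` amounts to working modulo `K`. -/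
lemma chain_mem {B : LinRel H} {K : Submodule ℂ H} {nu : ℂ} (hKB : K.prod K ≤ B)
    (hK : ∀ x y, (x, y) ∈ B → y - nu • x ∈ K → x ∈ K) :
    ∀ (n : ℕ) (x : ℕ → H), x 0 ∈ K → (∀ j < n, (x j, x (j + 1)) ∈ B) → x n ∈ K →
      ∀ j ≤ n, x j ∈ K := by
  intro n
  induction n with
  | zero =>
    intro x h0 _ _ j hj
    obtain rfl : j = 0 := by omega
    exact h0
  | succ n ih =>
    intro x h0 hx hn
    let y : ℕ → H := fun j => Nat.rec (x 0) (fun i r => nu • r + x (i + 1)) j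
    have y0 : y 0 = x 0 := rfl
    have ys : ∀ j, y (j + 1) = nu • y j + x (j + 1) := fun _ => rfl
    have hy : ∀ j < n + 1, (y j, y (j + 1)) ∈ B := by
      intro j
      induction j with
      | zero =>
        intro h
        have h1 : ((0 : H), nu • x 0) ∈ B := hKB ⟨K.zero_mem, K.smul_mem _ h0⟩
        have h2 := B.add_mem h1 (hx 0 h)
        rw [ys, y0]
        simpa using h2
      | succ j ihj =>
        intro h
        have h2 := B.add_mem (B.smul_mem nu (ihj (by omega))) (hx (j + 1) h)
        rw [ys (j + 1)]
        nth_rewrite 1 [ys j]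
        simpa using h2
    have hyn : y n ∈ K := hK _ _ (hy n (by omega)) (by rw [ys]; simpa using hn)
    have hall := ih y h0 (fun j hj => hy j (by omega)) hyn
    intro j hj
    rcases j with _ | j
    · exact h0
    · rcases Nat.lt_or_ge j n with h | h
      · have h1 := K.sub_mem (hall (j + 1) h) (K.smul_mem nu (hall j h.le))
        rw [ys] at h1
        simpa using h1
      · obtain rfl : j = n := by omega
        exact hn

lemma singChain_le_rootSpace (P : LinRel H) (nu : ℂ) :
    rootSpace P 0 ⊓ rootInf P ≤ rootSpace P nu := by
  rintro x ⟨hx0, hxi⟩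
  obtain ⟨k, hk⟩ := mem_rootSpace.1 hx0
  obtain ⟨i, hi⟩ := mem_rootInf.1 hxi
  have hs : shift P 0 = P := by
    ext ⟨u, v⟩
    simp [mem_shift]
  rw [hs] at hk
  obtain ⟨f, hf0, hfi, hf⟩ := exists_chain (A := P) 0 (fun _ => 0) (by simp) _ _ hi
  rw [← hfi] at hk
  obtain ⟨g, hg, hgn, hgP⟩ := exists_chain _ f hf _ _ hk
  set K := rootSpace P nu with hKdef
  have hg0 : g 0 = 0 := by rw [hg 0 (by omega), hf0 0 le_rfl]
  have hmem := chain_mem (B := P ⊔ K.prod K) (K := K) (nu := nu) le_sup_right ?_ _ g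
    (by rw [hg0]; exact K.zero_mem) (fun j hj => Submodule.mem_sup_left (hgP j hj))
    (by rw [hgn]; exact K.zero_mem) (0 + (i + 1)) (by omega)
  · rwa [hg _ le_rfl, hfi] at hmem
  · intro u v huv hv
    obtain ⟨⟨a, b⟩, hab, ⟨c, d⟩, ⟨hc, hd⟩, heq⟩ := Submodule.mem_sup.1 huv
    simp only [Prod.mk_add_mk, Prod.mk.injEq] at heq
    obtain ⟨rfl, rfl⟩ := heq
    refine K.add_mem (rootSpace_closed hab ?_) hc
    have h1 := K.add_mem (K.sub_mem hv hd) (K.smul_mem nu hc)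
    convert h1 using 1
    simp only [smul_add]
    abel

lemma rootSpace_inf_rootInf_le (A : LinRel H) (lam mu : ℂ) :
    rootSpace A lam ⊓ rootInf A ≤ rootSpace A mu := by
  have hP : ∀ {x y}, (x, y) ∈ A → (x, y - lam • x) ∈ shift A lam := fun h =>
    mem_shift.2 (by simpa using h)
  have h1 : rootSpace A lam ≤ rootSpace (shift A lam) 0 :=
    rootSpace_le fun x y h hy => rootSpace_closed (hP h) (by simpa using hy)
  have h2 : rootInf A ≤ rootInf (shift A lam) := rootInf_le fun x y h hx => by
    simpa using Submodule.add_mem _ (rootInf_closed (hP h) hx) (Submodule.smul_mem _ lam hx)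
  have h3 : rootSpace (shift A lam) (mu - lam) ≤ rootSpace A mu :=
    rootSpace_le fun x y h hy => rootSpace_closed (mem_shift.1 h) (by
      convert hy using 1
      rw [sub_smul]
      abel)
  exact (inf_le_inf h1 h2).trans ((singChain_le_rootSpace _ _).trans h3)

lemma rootSpace_inf_rootSpace_le (A : LinRel H) {lam mu : ℂ} (hne : lam ≠ mu) :
    rootSpace A lam ⊓ rootSpace A mu ≤ rootInf A := by
  have hd : mu - lam ≠ 0 := sub_ne_zero.2 hne.symm
  -- The Möbius transform of `A` taking `lam`, `mu`, `∞` to `0`, `∞`, `1`.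
  let P : LinRel H := A.map ((LinearMap.snd ℂ H H - mu • LinearMap.fst ℂ H H).prod
    (LinearMap.snd ℂ H H - lam • LinearMap.fst ℂ H H))
  have hP : ∀ {x y}, (x, y) ∈ A → (y - mu • x, y - lam • x) ∈ P := fun h => ⟨_, h, rfl⟩
  have hsub : ∀ x y : H, (y - lam • x) - (y - mu • x) = (mu - lam) • x := fun x y => by
    rw [sub_smul]
    abel
  have h1 : rootSpace A lam ≤ rootSpace P 0 := rootSpace_le fun x y h hy => by
    have := Submodule.sub_mem _ hy (rootSpace_closed (hP h) (by simpa using hy))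
    rw [hsub] at this
    exact (Submodule.smul_mem_iff _ hd).1 this
  have h2 : rootSpace A mu ≤ rootInf P := rootSpace_le fun x y h hy => by
    have := Submodule.sub_mem _ (rootInf_closed (hP h) hy) hy
    rw [hsub] at this
    exact (Submodule.smul_mem_iff _ hd).1 this
  have h3 : rootSpace P 1 ≤ rootInf A := rootSpace_le fun u v h hv => by
    obtain ⟨⟨x, y⟩, hxy, heq⟩ := h
    obtain ⟨rfl, rfl⟩ : y - mu • x = u ∧ y - lam • x = v := Prod.mk.inj heq
    rw [one_smul, hsub] at hv
    have hx := (Submodule.smul_mem_iff _ hd).1 hv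
    exact Submodule.sub_mem _ (rootInf_closed hxy hx) (Submodule.smul_mem _ mu hx)
  exact (inf_le_inf h1 h2).trans ((singChain_le_rootSpace _ _).trans h3)

end LinRel

/-- `R_c(A) = R_λ(A) ∩ R_μ(A)` for `λ, μ ∈ ℂ` with `λ ≠ μ`. -/
theorem statement_10 (A : LinRel H) (lam mu : ℂ) (hne : lam ≠ mu) :
    LinRel.singChain A = LinRel.rootSpace A lam ⊓ LinRel.rootSpace A mu := by
  apply le_antisymm
  · exact le_inf (LinRel.rootSpace_inf_rootInf_le A 0 lam) (LinRel.rootSpace_inf_rootInf_le A 0 mu)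
  · have h := LinRel.rootSpace_inf_rootSpace_le A hne
    exact le_inf ((le_inf inf_le_left h).trans (LinRel.rootSpace_inf_rootInf_le A lam 0)) h
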